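/- Let Ω ⊆ ℝ³ be open and let f = (f₁,f₂,f₃) : Ω → ℝ³ be a smooth conformal map. Write λ = J_F and F = f₁ + i f₂. Then each of the following eight functions w₀ satisfies Z²w₀ = 0 on Ω: λ⁻¹·(f₃² + (f₁² + f₂²)²), λ⁻¹·(f₃f₂ − f₁(f₁² + f₂²)), λ⁻¹·(f₃f₁ + f₂(f₁² + f₂²)), λ⁻¹·(f₁² + f₂²), λ⁻¹·f₁, λ⁻¹·f₂, λ⁻¹·f₃, and λ⁻¹. In particular S_CR(f) = (1/2)·J_F·Z²(J_F⁻¹) = 0 on Ω. -/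

import Mathlib

noncomputable section

open Complex

/-- The underlying space of the first Heisenberg group: ℝ³ with coordinates (x, y, t). -/
abbrev Heis : Type := ℝ × ℝ × ℝ

/-- The left-invariant vector field X = ∂/∂x + 2y ∂/∂t, as a derivation. -/
def XD {E : Type*} [NormedAddCommGroup E] [NormedSpace ℝ E] (u : Heis → E) (p : Heis) : E :=
  fderiv ℝ u p (1, 0, 2 * p.2.1)

/-- The left-invariant vector field Y = ∂/∂y − 2x ∂/∂t, as a derivation. -/
def YD {E : Type*} [NormedAddCommGroup E] [NormedSpace ℝ E] (u : Heis → E) (p : Heis) : E :=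
  fderiv ℝ u p (0, 1, -(2 * p.1))

/-- The vector field T = ∂/∂t, as a derivation. -/
def TD {E : Type*} [NormedAddCommGroup E] [NormedSpace ℝ E] (u : Heis → E) (p : Heis) : E :=
  fderiv ℝ u p (0, 0, 1)

/-- Z = (X − iY)/2. -/
def ZD (u : Heis → ℂ) (p : Heis) : ℂ := (XD u p - Complex.I * YD u p) / 2

/-- Z̄ = (X + iY)/2. -/
def ZbD (u : Heis → ℂ) (p : Heis) : ℂ := (XD u p + Complex.I * YD u p) / 2

/-- The complexification F = f₁ + i f₂ of the horizontal components. -/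
def CF (f1 f2 : Heis → ℝ) : Heis → ℂ := fun p => (f1 p : ℂ) + (f2 p : ℂ) * Complex.I

/-- Complexification of a real-valued function. -/
def Cplx (u : Heis → ℝ) : Heis → ℂ := fun p => (u p : ℂ)

/-- The horizontal Jacobian J_F = Xf₁·Yf₂ − Yf₁·Xf₂. -/
def JF (f1 f2 : Heis → ℝ) (p : Heis) : ℝ := XD f1 p * YD f2 p - YD f1 p * XD f2 p

/-- The contact equations on Ω. -/
def ContactOn (f1 f2 f3 : Heis → ℝ) (Ω : Set Heis) : Prop :=
  ∀ p ∈ Ω, XD f3 p - 2 * f2 p * XD f1 p + 2 * f1 p * XD f2 p = 0 ∧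
           YD f3 p - 2 * f2 p * YD f1 p + 2 * f1 p * YD f2 p = 0

/-- f = (f₁,f₂,f₃) is conformal on Ω: smooth, contact, J_F > 0, and the conformality
equations hold. -/
def ConformalOn (f1 f2 f3 : Heis → ℝ) (Ω : Set Heis) : Prop :=
  ContDiffOn ℝ (⊤ : ℕ∞) f1 Ω ∧ ContDiffOn ℝ (⊤ : ℕ∞) f2 Ω ∧ ContDiffOn ℝ (⊤ : ℕ∞) f3 Ω ∧
  ContactOn f1 f2 f3 Ω ∧ (∀ p ∈ Ω, 0 < JF f1 f2 p) ∧
  ∀ p ∈ Ω, (XD f1 p) ^ 2 + (XD f2 p) ^ 2 = (YD f1 p) ^ 2 + (YD f2 p) ^ 2 ∧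
           XD f1 p * YD f1 p + XD f2 p * YD f2 p = 0

/-- The sub-Laplacian Δ_H = X² + Y². -/
def LapH {E : Type*} [NormedAddCommGroup E] [NormedSpace ℝ E] (u : Heis → E) (p : Heis) : E :=
  XD (XD u) p + YD (YD u) p

/-- The CR Schwarzian derivative S_CR(f) = (1/2)·J_F·Z²(J_F⁻¹). -/
def SCR (f1 f2 : Heis → ℝ) (p : Heis) : ℂ :=
  (1 / 2 : ℂ) * (JF f1 f2 p : ℂ) * ZD (ZD (fun q => (((JF f1 f2 q)⁻¹ : ℝ) : ℂ))) p

/-- The classical type Schwarzian S_CL(f) = Z³F/ZF − (3/2)(Z²F/ZF)². -/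
def SCL (f1 f2 : Heis → ℝ) (p : Heis) : ℂ :=
  ZD (ZD (ZD (CF f1 f2))) p / ZD (CF f1 f2) p
    - (3 / 2 : ℂ) * (ZD (ZD (CF f1 f2)) p / ZD (CF f1 f2) p) ^ 2

/-- The Preschwarzian Pf = Z(ln J_F). -/
def PS (f1 f2 : Heis → ℝ) (p : Heis) : ℂ := ZD (Cplx (fun q => Real.log (JF f1 f2 q))) p

/-- The map (f₁,f₂,f₃) packaged as a map Heis → Heis. -/
def Fmap (f1 f2 f3 : Heis → ℝ) (p : Heis) : Heis := (f1 p, f2 p, f3 p)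

open scoped ContDiff

section DerivationRules

variable {u v : Heis → ℂ} {p : Heis} {Ω : Set Heis}

/-- `Z` depends only on the germ of the function. -/
lemma ZD_congr (hΩ : IsOpen Ω) (h : ∀ q ∈ Ω, u q = v q) (hp : p ∈ Ω) : ZD u p = ZD v p := by
  have e : fderiv ℝ u p = fderiv ℝ v p :=
    Filter.EventuallyEq.fderiv_eq (Filter.eventuallyEq_of_mem (hΩ.mem_nhds hp) h)
  simp only [ZD, XD, YD, e]

lemma ZD_const (c : ℂ) : ZD (fun _ => c) p = 0 := by
  simp [ZD, XD, YD]

lemma ZD_add (hu : DifferentiableAt ℝ u p) (hv : DifferentiableAt ℝ v p) :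
    ZD (fun q => u q + v q) p = ZD u p + ZD v p := by
  simp only [ZD, XD, YD, fderiv_fun_add hu hv, add_apply]
  ring

lemma ZD_mul (hu : DifferentiableAt ℝ u p) (hv : DifferentiableAt ℝ v p) :
    ZD (fun q => u q * v q) p = ZD u p * v p + u p * ZD v p := by
  simp only [ZD, XD, YD, fderiv_fun_mul hu hv, add_apply,
    smul_apply, smul_eq_mul]
  ring

lemma XD_contDiffOn {E : Type*} [NormedAddCommGroup E] [NormedSpace ℝ E] {u : Heis → E}
    (hΩ : IsOpen Ω) (hu : ContDiffOn ℝ ∞ u Ω) : ContDiffOn ℝ ∞ (XD u) Ω :=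
  (hu.fderiv_of_isOpen hΩ (m := ∞) (by simp)).clm_apply
    (ContDiff.contDiffOn (by fun_prop))

lemma YD_contDiffOn (hΩ : IsOpen Ω) (hu : ContDiffOn ℝ ∞ u Ω) : ContDiffOn ℝ ∞ (YD u) Ω :=
  (hu.fderiv_of_isOpen hΩ (m := ∞) (by simp)).clm_apply
    (ContDiff.contDiffOn (by fun_prop))

lemma TD_contDiffOn (hΩ : IsOpen Ω) (hu : ContDiffOn ℝ ∞ u Ω) : ContDiffOn ℝ ∞ (TD u) Ω :=
  (hu.fderiv_of_isOpen hΩ (m := ∞) (by simp)).clm_apply contDiffOn_const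

lemma ZD_contDiffOn (hΩ : IsOpen Ω) (hu : ContDiffOn ℝ ∞ u Ω) : ContDiffOn ℝ ∞ (ZD u) Ω :=
  ((XD_contDiffOn hΩ hu).sub (contDiffOn_const.mul (YD_contDiffOn hΩ hu))).div_const 2

lemma ZbD_contDiffOn (hΩ : IsOpen Ω) (hu : ContDiffOn ℝ ∞ u Ω) : ContDiffOn ℝ ∞ (ZbD u) Ω :=
  ((XD_contDiffOn hΩ hu).add (contDiffOn_const.mul (YD_contDiffOn hΩ hu))).div_const 2

lemma differentiableAt_of_smooth (hΩ : IsOpen Ω) (hu : ContDiffOn ℝ ∞ u Ω) (hp : p ∈ Ω) :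
    DifferentiableAt ℝ u p :=
  (hu.contDiffAt (hΩ.mem_nhds hp)).differentiableAt (by simp)

end DerivationRules

section Commutators

variable {u : Heis → ℂ} {p : Heis} {Ω : Set Heis}

/-- Derivative of `u` along a variable direction `w`. -/
lemma fderiv_fderiv_apply (hu : ContDiffAt ℝ ∞ u p) {w : Heis → Heis} {w' : Heis →L[ℝ] Heis}
    (hw : HasFDerivAt w w' p) (v : Heis) :
    fderiv ℝ (fun q => fderiv ℝ u q (w q)) p v
      = fderiv ℝ (fderiv ℝ u) p v (w p) + fderiv ℝ u p (w' v) := by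
  have hd : DifferentiableAt ℝ (fderiv ℝ u) p :=
    (hu.fderiv_right (m := 1) (by norm_cast)).differentiableAt (by simp)
  rw [(hd.hasFDerivAt.clm_apply hw).fderiv]
  simp [add_comm]

lemma hasFDerivAt_directionX (p : Heis) :
    HasFDerivAt (fun q : Heis => ((1, 0, 2 * q.2.1) : Heis))
      ((0 : Heis →L[ℝ] ℝ).prod ((0 : Heis →L[ℝ] ℝ).prod
        ((2 : ℝ) •
          ((ContinuousLinearMap.fst ℝ ℝ ℝ).comp (ContinuousLinearMap.snd ℝ ℝ (ℝ × ℝ)))))) p :=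
  (hasFDerivAt_const _ _).prodMk ((hasFDerivAt_const _ _).prodMk
    ((hasFDerivAt_snd.fst).const_mul 2))

lemma hasFDerivAt_directionY (p : Heis) :
    HasFDerivAt (fun q : Heis => ((0, 1, -(2 * q.1)) : Heis))
      ((0 : Heis →L[ℝ] ℝ).prod ((0 : Heis →L[ℝ] ℝ).prod
        (-((2 : ℝ) • (ContinuousLinearMap.fst ℝ ℝ (ℝ × ℝ)))))) p :=
  (hasFDerivAt_const _ _).prodMk ((hasFDerivAt_const _ _).prodMk
    ((hasFDerivAt_fst.const_mul 2).neg))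

lemma second_fderiv_symm (hu : ContDiffAt ℝ ∞ u p) (v w : Heis) :
    fderiv ℝ (fderiv ℝ u) p v w = fderiv ℝ (fderiv ℝ u) p w v :=
  hu.isSymmSndFDerivAt (minSmoothness_of_isRCLikeNormedField.trans_le
    (WithTop.coe_le_coe.mpr le_top)) v w

lemma XD_YD_sub_YD_XD (hu : ContDiffAt ℝ ∞ u p) :
    XD (YD u) p - YD (XD u) p = -4 * TD u p := by
  have h1 : XD (YD u) p = _ := fderiv_fderiv_apply hu (hasFDerivAt_directionY p) _
  have h2 : YD (XD u) p = _ := fderiv_fderiv_apply hu (hasFDerivAt_directionX p) _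
  rw [h1, h2, second_fderiv_symm hu]
  have e1 : fderiv ℝ u p (0, 0, -2) = -2 * TD u p := by
    have : ((0, 0, -2) : Heis) = (-2 : ℝ) • ((0, 0, 1) : Heis) := by simp
    rw [this, map_smul, TD]; simp
  have e2 : fderiv ℝ u p (0, 0, 2) = 2 * TD u p := by
    have : ((0, 0, 2) : Heis) = (2 : ℝ) • ((0, 0, 1) : Heis) := by simp
    rw [this, map_smul, TD]; simp
  simp [e1, e2]
  ring

lemma XD_TD (hu : ContDiffAt ℝ ∞ u p) : XD (TD u) p = TD (XD u) p := by
  have h1 : XD (TD u) p = _ := fderiv_fderiv_apply hu (hasFDerivAt_const _ p) _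
  have h2 : TD (XD u) p = _ := fderiv_fderiv_apply hu (hasFDerivAt_directionX p) _
  rw [h1, h2, second_fderiv_symm hu]
  simp [← Prod.zero_eq_mk]

lemma YD_TD (hu : ContDiffAt ℝ ∞ u p) : YD (TD u) p = TD (YD u) p := by
  have h1 : YD (TD u) p = _ := fderiv_fderiv_apply hu (hasFDerivAt_const _ p) _
  have h2 : TD (YD u) p = _ := fderiv_fderiv_apply hu (hasFDerivAt_directionY p) _
  rw [h1, h2, second_fderiv_symm hu]
  simp [← Prod.zero_eq_mk]

/-- The derivative of `(u + c v) / 2` in the direction `w`. -/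
lemma fderiv_half_combination {v : Heis → ℂ} (hu : DifferentiableAt ℝ u p)
    (hv : DifferentiableAt ℝ v p) (c : ℂ) (w : Heis) :
    fderiv ℝ (fun q => (u q + c * v q) / 2) p w
      = (fderiv ℝ u p w + c * fderiv ℝ v p w) / 2 := by
  have h : HasFDerivAt (fun q => (u q + c * v q) * (2⁻¹ : ℂ)) _ p :=
    (hu.hasFDerivAt.add (hv.hasFDerivAt.const_mul c)).mul_const (2⁻¹ : ℂ)
  simp only [div_eq_mul_inv]
  rw [h.fderiv]
  simp
  ring

/-- A smooth solution of `Zu = 0` satisfies `Z²Z̄u = 0`, because `[Z, [Z, Z̄]] = 0`. -/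
lemma ZD_ZD_ZbD_eq_zero (hΩ : IsOpen Ω) (hu : ContDiffOn ℝ ∞ u Ω)
    (h0 : ∀ q ∈ Ω, ZD u q = 0) (hp : p ∈ Ω) : ZD (ZD (ZbD u)) p = 0 := by
  have hX := XD_contDiffOn hΩ hu
  have hY := YD_contDiffOn hΩ hu
  have key : ∀ q ∈ Ω, ZD (ZbD u) q = (-2 * I) * TD u q := by
    intro q hq
    have dX := differentiableAt_of_smooth hΩ hX hq
    have dY := differentiableAt_of_smooth hΩ hY hq
    have eZ : fderiv ℝ (ZD u) q = 0 := by
      rw [Filter.EventuallyEq.fderiv_eq (f := fun _ => (0 : ℂ))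
        (Filter.eventuallyEq_of_mem (hΩ.mem_nhds hq) h0)]
      simp
    have eZ' : ZD u = fun q => (XD u q + (-I) * YD u q) / 2 := by
      funext q; simp only [ZD]; ring
    rw [eZ'] at eZ
    have c := XD_YD_sub_YD_XD (hu.contDiffAt (hΩ.mem_nhds hq))
    have zX := fderiv_half_combination dX dY (-I) (1, 0, 2 * q.2.1)
    have zY := fderiv_half_combination dX dY (-I) (0, 1, -(2 * q.1))
    have bX : XD (ZbD u) q = _ := fderiv_half_combination dX dY I (1, 0, 2 * q.2.1)
    have bY : YD (ZbD u) q = _ := fderiv_half_combination dX dY I (0, 1, -(2 * q.1))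
    rw [eZ] at zX zY
    rw [ZD, bX, bY]
    simp only [zero_apply] at zX zY
    simp only [XD, YD] at c zX zY ⊢
    linear_combination (I / 2) * c - (1 / 2) * zX - (I / 2) * zY
  have hT := TD_contDiffOn hΩ hu
  rw [ZD_congr hΩ key hp, ZD_mul (differentiableAt_const _) (differentiableAt_of_smooth hΩ hT hp),
    ZD_const]
  have eZ : TD (ZD u) p = 0 := by
    rw [TD, Filter.EventuallyEq.fderiv_eq (f := fun _ => (0 : ℂ))
      (Filter.eventuallyEq_of_mem (hΩ.mem_nhds hp) h0)]
    simp
  have eZ' : ZD u = fun q => (XD u q + (-I) * YD u q) / 2 := by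
    funext q; simp only [ZD]; ring
  rw [eZ', TD, fderiv_half_combination (differentiableAt_of_smooth hΩ hX hp)
    (differentiableAt_of_smooth hΩ hY hp)] at eZ
  have cu := hu.contDiffAt (hΩ.mem_nhds hp)
  rw [ZD, XD_TD cu, YD_TD cu]
  simp only [TD]
  linear_combination (-2 * I) * eZ

end Commutators

/-- Smooth functions on `Ω` annihilated by `Z`. -/
def AntiCROn (Ω : Set Heis) (u : Heis → ℂ) : Prop :=
  ContDiffOn ℝ ∞ u Ω ∧ ∀ p ∈ Ω, ZD u p = 0

namespace AntiCROn

variable {Ω : Set Heis} {u v : Heis → ℂ}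

lemma const (c : ℂ) : AntiCROn Ω fun _ => c :=
  ⟨contDiffOn_const, fun _ _ => ZD_const c⟩

lemma add (hΩ : IsOpen Ω) (hu : AntiCROn Ω u) (hv : AntiCROn Ω v) :
    AntiCROn Ω fun q => u q + v q := by
  refine ⟨hu.1.add hv.1, fun p hp => ?_⟩
  rw [ZD_add (differentiableAt_of_smooth hΩ hu.1 hp) (differentiableAt_of_smooth hΩ hv.1 hp),
    hu.2 p hp, hv.2 p hp, add_zero]

lemma mul (hΩ : IsOpen Ω) (hu : AntiCROn Ω u) (hv : AntiCROn Ω v) :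
    AntiCROn Ω fun q => u q * v q := by
  refine ⟨hu.1.mul hv.1, fun p hp => ?_⟩
  rw [ZD_mul (differentiableAt_of_smooth hΩ hu.1 hp) (differentiableAt_of_smooth hΩ hv.1 hp),
    hu.2 p hp, hv.2 p hp]
  ring

/-- `Z` is linear over functions annihilated by `Z`. -/
lemma ZD_mul_eq (hΩ : IsOpen Ω) (hu : AntiCROn Ω u) (hv : ContDiffOn ℝ ∞ v Ω) {p : Heis}
    (hp : p ∈ Ω) : ZD (fun q => u q * v q) p = u p * ZD v p := by
  rw [ZD_mul (differentiableAt_of_smooth hΩ hu.1 hp) (differentiableAt_of_smooth hΩ hv hp),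
    hu.2 p hp]
  ring

end AntiCROn

section AbstractIdentity

variable {Ω : Set Heis} {F G W h : Heis → ℂ}

/-- The second derivatives `Z²h` and `Z²(hF)` vanish when `h` is the reciprocal of `ZF · Z̄G`, the
functions `G`, `W` are annihilated by `Z`, and `Z̄W = -2i F Z̄G`. -/
lemma ZD_ZD_reciprocal_eq_zero (hΩ : IsOpen Ω) (hF : ContDiffOn ℝ ∞ F Ω) (hG : AntiCROn Ω G)
    (hW : AntiCROn Ω W) (hh : ContDiffOn ℝ ∞ h Ω)
    (hWF : ∀ q ∈ Ω, ZbD W q = (-2 * I) * (F q * ZbD G q))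
    (hJ : ∀ q ∈ Ω, h q * (ZD F q * ZbD G q) = 1) {p : Heis} (hp : p ∈ Ω) :
    ZD (ZD h) p = 0 ∧ ZD (ZD fun q => h q * F q) p = 0 := by
  have dd {u : Heis → ℂ} (hu : ContDiffOn ℝ ∞ u Ω) {q : Heis} (hq : q ∈ Ω) :
      DifferentiableAt ℝ u q := differentiableAt_of_smooth hΩ hu hq
  have sa := ZD_contDiffOn hΩ hF
  have sb := ZbD_contDiffOn hΩ hG.1
  have sc := ZD_contDiffOn hΩ sb
  have szh := ZD_contDiffOn hΩ hh
  have hc : ∀ q ∈ Ω, ZD (ZD (ZbD G)) q = 0 := fun q hq => ZD_ZD_ZbD_eq_zero hΩ hG.1 hG.2 hq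
  have hcW : ∀ q ∈ Ω, ZD (ZD (ZbD W)) q = 0 := fun q hq => ZD_ZD_ZbD_eq_zero hΩ hW.1 hW.2 hq
  have hZW : ∀ q ∈ Ω, ZD (ZbD W) q
      = (-2 * I) * (ZD F q * ZbD G q + F q * ZD (ZbD G) q) := by
    intro q hq
    rw [ZD_congr hΩ hWF hq, (AntiCROn.const (-2 * I)).ZD_mul_eq hΩ (hF.mul sb) hq,
      ZD_mul (dd hF hq) (dd sb hq)]
  have hZa : ∀ q ∈ Ω, ZD (ZD F) q * ZbD G q = -2 * (ZD F q * ZD (ZbD G) q) := by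
    intro q hq
    have e := hcW q hq
    rw [ZD_congr hΩ hZW hq,
      (AntiCROn.const (-2 * I)).ZD_mul_eq hΩ ((sa.mul sb).add (hF.mul sc)) hq,
      ZD_add (dd (sa.mul sb) hq) (dd (hF.mul sc) hq),
      ZD_mul (dd sa hq) (dd sb hq), ZD_mul (dd hF hq) (dd sc hq), hc q hq] at e
    have e' := (mul_eq_zero.mp e).resolve_left (by simp)
    linear_combination e'
  have ha : ∀ q ∈ Ω, ZD F q ≠ 0 := fun q hq h0 => by simpa [h0] using hJ q hq
  have hb : ∀ q ∈ Ω, ZbD G q ≠ 0 := fun q hq h0 => by simpa [h0] using hJ q hq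
  have hZh : ∀ q ∈ Ω, ZD h q * ZbD G q = h q * ZD (ZbD G) q := by
    intro q hq
    have e : ZD (fun q => h q * (ZD F q * ZbD G q)) q = 0 := by
      rw [ZD_congr hΩ hJ hq, ZD_const]
    rw [ZD_mul (dd hh hq) (dd (sa.mul sb) hq), ZD_mul (dd sa hq) (dd sb hq)] at e
    apply mul_left_cancel₀ (ha q hq)
    linear_combination e - h q * hZa q hq
  have hZZh : ZD (ZD h) p = 0 := by
    have e := ZD_congr hΩ hZh hp
    rw [ZD_mul (dd szh hp) (dd sb hp), ZD_mul (dd hh hp) (dd sc hp), hc p hp] at e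
    apply mul_right_cancel₀ (hb p hp)
    linear_combination e
  refine ⟨hZZh, ?_⟩
  rw [ZD_congr hΩ (fun q hq => ZD_mul (dd hh hq) (dd hF hq)) hp,
    ZD_add (dd (szh.mul hF) hp) (dd (hh.mul sa) hp), ZD_mul (dd szh hp) (dd hF hp),
    ZD_mul (dd hh hp) (dd sa hp), hZZh]
  apply mul_right_cancel₀ (hb p hp)
  linear_combination 2 * ZD F p * hZh p hp + h p * hZa p hp

/-- `Z²` is linear over functions annihilated by `Z`. -/
lemma ZD_ZD_combination (hΩ : IsOpen Ω) {α β u v : Heis → ℂ} (hα : AntiCROn Ω α)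
    (hβ : AntiCROn Ω β) (hu : ContDiffOn ℝ ∞ u Ω) (hv : ContDiffOn ℝ ∞ v Ω)
    {p : Heis} (hp : p ∈ Ω) :
    ZD (ZD fun q => α q * u q + β q * v q) p = α p * ZD (ZD u) p + β p * ZD (ZD v) p := by
  have dd {u : Heis → ℂ} (hu : ContDiffOn ℝ ∞ u Ω) {q : Heis} (hq : q ∈ Ω) :
      DifferentiableAt ℝ u q := differentiableAt_of_smooth hΩ hu hq
  have zu := ZD_contDiffOn hΩ hu
  have zv := ZD_contDiffOn hΩ hv
  have e : ∀ q ∈ Ω, ZD (fun q => α q * u q + β q * v q) q = α q * ZD u q + β q * ZD v q := by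
    intro q hq
    rw [ZD_add (dd (hα.1.mul hu) hq) (dd (hβ.1.mul hv) hq), hα.ZD_mul_eq hΩ hu hq,
      hβ.ZD_mul_eq hΩ hv hq]
  rw [ZD_congr hΩ e hp, ZD_add (dd (hα.1.mul zu) hp) (dd (hβ.1.mul zv) hp),
    hα.ZD_mul_eq hΩ zu hp, hβ.ZD_mul_eq hΩ zv hp]

end AbstractIdentity

section Conformal

/-- The conjugate `f₁ - i f₂` of `F`. -/
def CFconj (f1 f2 : Heis → ℝ) : Heis → ℂ := fun p => (f1 p : ℂ) - (f2 p : ℂ) * I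

/-- The function `f₃ - i |F|²`. -/
def CRPotential (f1 f2 f3 : Heis → ℝ) : Heis → ℂ :=
  fun p => (f3 p : ℂ) - I * ((f1 p : ℂ) ^ 2 + (f2 p : ℂ) ^ 2)

variable {f1 f2 f3 : Heis → ℝ} {p : Heis} {Ω : Set Heis}

lemma hasFDerivAt_ofReal {f : Heis → ℝ} (hf : DifferentiableAt ℝ f p) :
    HasFDerivAt (fun q => (f q : ℂ)) (ofRealCLM.comp (fderiv ℝ f p)) p :=
  ofRealCLM.hasFDerivAt.comp p hf.hasFDerivAt

lemma fderiv_CF (h1 : DifferentiableAt ℝ f1 p) (h2 : DifferentiableAt ℝ f2 p) (v : Heis) :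
    fderiv ℝ (CF f1 f2) p v = (fderiv ℝ f1 p v : ℂ) + (fderiv ℝ f2 p v : ℂ) * I := by
  have h : HasFDerivAt (CF f1 f2) _ p :=
    (hasFDerivAt_ofReal h1).add ((hasFDerivAt_ofReal h2).mul_const I)
  rw [h.fderiv]
  simp [mul_comm]

lemma fderiv_CFconj (h1 : DifferentiableAt ℝ f1 p) (h2 : DifferentiableAt ℝ f2 p) (v : Heis) :
    fderiv ℝ (CFconj f1 f2) p v = (fderiv ℝ f1 p v : ℂ) - (fderiv ℝ f2 p v : ℂ) * I := by
  have h : HasFDerivAt (CFconj f1 f2) _ p :=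
    (hasFDerivAt_ofReal h1).sub ((hasFDerivAt_ofReal h2).mul_const I)
  rw [h.fderiv]
  simp [mul_comm]

lemma fderiv_CRPotential (h1 : DifferentiableAt ℝ f1 p) (h2 : DifferentiableAt ℝ f2 p)
    (h3 : DifferentiableAt ℝ f3 p) (v : Heis) :
    fderiv ℝ (CRPotential f1 f2 f3) p v = (fderiv ℝ f3 p v : ℂ)
      - 2 * I * (f1 p * (fderiv ℝ f1 p v : ℂ) + f2 p * (fderiv ℝ f2 p v : ℂ)) := by
  have h : HasFDerivAt (CRPotential f1 f2 f3) _ p :=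
    (hasFDerivAt_ofReal h3).sub
      ((((hasFDerivAt_ofReal h1).pow 2).add ((hasFDerivAt_ofReal h2).pow 2)).const_mul I)
  rw [h.fderiv]
  simp
  ring

/-- The conformality equations with positive Jacobian are Cauchy–Riemann equations. -/
lemma cauchyRiemann_of_conformal {a b c d : ℝ} (hJ : 0 < a * d - c * b)
    (hn : a ^ 2 + b ^ 2 = c ^ 2 + d ^ 2) (ho : a * c + b * d = 0) : d = a ∧ c = -b := by
  have hsq : (a * d - c * b) ^ 2 = (a ^ 2 + b ^ 2) ^ 2 := by
    linear_combination (-(a ^ 2 + b ^ 2)) * hn - (a * c + b * d) * ho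
  have hJ' : a * d - c * b = a ^ 2 + b ^ 2 :=
    (pow_left_inj₀ hJ.le (by positivity) two_ne_zero).mp hsq
  have hs : (d - a) ^ 2 + (c + b) ^ 2 = 0 := by linear_combination -hn - 2 * hJ'
  constructor <;> nlinarith [sq_nonneg (d - a), sq_nonneg (c + b)]

/-- A combination `α + βF` with `Zα = Zβ = 0` divided by the Jacobian is annihilated by `Z²`. -/
lemma ConformalOn.ZD_ZD_eq_zero (hΩ : IsOpen Ω) (hconf : ConformalOn f1 f2 f3 Ω) :
    AntiCROn Ω (CFconj f1 f2) ∧ AntiCROn Ω (CRPotential f1 f2 f3) ∧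
    ∀ α β w : Heis → ℂ, AntiCROn Ω α → AntiCROn Ω β →
      (∀ q, w q = (((JF f1 f2 q)⁻¹ : ℝ) : ℂ) * (α q + β q * CF f1 f2 q)) →
      ∀ p ∈ Ω, ZD (ZD w) p = 0 := by
  obtain ⟨h1, h2, h3, hcont, hpos, hcf⟩ := hconf
  have toC {f : Heis → ℝ} (hf : ContDiffOn ℝ ∞ f Ω) : ContDiffOn ℝ ∞ (fun q => (f q : ℂ)) Ω :=
    ofRealCLM.contDiff.comp_contDiffOn hf
  have dd {f : Heis → ℝ} (hf : ContDiffOn ℝ ∞ f Ω) {q : Heis} (hq : q ∈ Ω) :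
      DifferentiableAt ℝ f q := (hf.contDiffAt (hΩ.mem_nhds hq)).differentiableAt (by simp)
  have sF : ContDiffOn ℝ ∞ (CF f1 f2) Ω := (toC h1).add ((toC h2).mul contDiffOn_const)
  have sG : ContDiffOn ℝ ∞ (CFconj f1 f2) Ω := (toC h1).sub ((toC h2).mul contDiffOn_const)
  have sW : ContDiffOn ℝ ∞ (CRPotential f1 f2 f3) Ω :=
    (toC h3).sub (contDiffOn_const.mul (((toC h1).pow 2).add ((toC h2).pow 2)))
  have cr : ∀ q ∈ Ω, YD f2 q = XD f1 q ∧ YD f1 q = -XD f2 q := fun q hq =>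
    cauchyRiemann_of_conformal (hpos q hq) (hcf q hq).1 (hcf q hq).2
  have ct : ∀ q ∈ Ω, XD f3 q = 2 * f2 q * XD f1 q - 2 * f1 q * XD f2 q ∧
      YD f3 q = -(2 * f2 q * XD f2 q) - 2 * f1 q * XD f1 q := by
    intro q hq
    obtain ⟨c1, c2⟩ := hcont q hq
    rw [(cr q hq).1, (cr q hq).2] at c2
    constructor <;> linarith
  have hG : AntiCROn Ω (CFconj f1 f2) := by
    refine ⟨sG, fun q hq => ?_⟩
    obtain ⟨e1, e2⟩ := cr q hq
    have X1 : XD (CFconj f1 f2) q = _ := fderiv_CFconj (dd h1 hq) (dd h2 hq) _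
    have Y1 : YD (CFconj f1 f2) q = _ := fderiv_CFconj (dd h1 hq) (dd h2 hq) _
    rw [ZD, X1, Y1]
    simp only [← XD.eq_def, ← YD.eq_def, e1, e2]
    push_cast
    linear_combination (XD f1 q / 2 : ℂ) * I_sq
  have zbG : ∀ q ∈ Ω, ZbD (CFconj f1 f2) q = XD f1 q - XD f2 q * I := by
    intro q hq
    obtain ⟨e1, e2⟩ := cr q hq
    have X1 : XD (CFconj f1 f2) q = _ := fderiv_CFconj (dd h1 hq) (dd h2 hq) _
    have Y1 : YD (CFconj f1 f2) q = _ := fderiv_CFconj (dd h1 hq) (dd h2 hq) _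
    rw [ZbD, X1, Y1]
    simp only [← XD.eq_def, ← YD.eq_def, e1, e2]
    push_cast
    linear_combination (-XD f1 q / 2 : ℂ) * I_sq
  have zF : ∀ q ∈ Ω, ZD (CF f1 f2) q = XD f1 q + XD f2 q * I := by
    intro q hq
    obtain ⟨e1, e2⟩ := cr q hq
    have X1 : XD (CF f1 f2) q = _ := fderiv_CF (dd h1 hq) (dd h2 hq) _
    have Y1 : YD (CF f1 f2) q = _ := fderiv_CF (dd h1 hq) (dd h2 hq) _
    rw [ZD, X1, Y1]
    simp only [← XD.eq_def, ← YD.eq_def, e1, e2]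
    push_cast
    linear_combination (-XD f1 q / 2 : ℂ) * I_sq
  have XW : ∀ q ∈ Ω, XD (CRPotential f1 f2 f3) q = XD f3 q
      - 2 * I * (f1 q * XD f1 q + f2 q * XD f2 q) := fun q hq =>
    fderiv_CRPotential (dd h1 hq) (dd h2 hq) (dd h3 hq) _
  have YW : ∀ q ∈ Ω, YD (CRPotential f1 f2 f3) q = YD f3 q
      - 2 * I * (f1 q * YD f1 q + f2 q * YD f2 q) := fun q hq =>
    fderiv_CRPotential (dd h1 hq) (dd h2 hq) (dd h3 hq) _
  have hW : AntiCROn Ω (CRPotential f1 f2 f3) := by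
    refine ⟨sW, fun q hq => ?_⟩
    rw [ZD, XW q hq, YW q hq, (ct q hq).1, (ct q hq).2, (cr q hq).1, (cr q hq).2]
    push_cast
    linear_combination (f2 q * XD f1 q - f1 q * XD f2 q : ℂ) * I_sq
  have hWF : ∀ q ∈ Ω, ZbD (CRPotential f1 f2 f3) q
      = (-2 * I) * (CF f1 f2 q * ZbD (CFconj f1 f2) q) := by
    intro q hq
    rw [zbG q hq, ZbD, XW q hq, YW q hq, (ct q hq).1, (ct q hq).2, (cr q hq).1, (cr q hq).2, CF]
    push_cast
    linear_combination (f2 q * XD f1 q - f1 q * XD f2 q - 2 * I * f2 q * XD f2 q : ℂ) * I_sq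
  have hJ : ∀ q ∈ Ω, JF f1 f2 q = XD f1 q ^ 2 + XD f2 q ^ 2 := by
    intro q hq
    rw [JF, (cr q hq).1, (cr q hq).2]
    ring
  have hfac : ∀ q ∈ Ω, (((JF f1 f2 q)⁻¹ : ℝ) : ℂ) * (ZD (CF f1 f2) q * ZbD (CFconj f1 f2) q)
      = 1 := by
    intro q hq
    have e : ZD (CF f1 f2) q * ZbD (CFconj f1 f2) q = (JF f1 f2 q : ℂ) := by
      rw [zF q hq, zbG q hq, hJ q hq]
      push_cast
      linear_combination (-((XD f2 q : ℝ) : ℂ) ^ 2) * I_sq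
    rw [e, ← ofReal_mul, inv_mul_cancel₀ (hpos q hq).ne', ofReal_one]
  have sJ : ContDiffOn ℝ ∞ (JF f1 f2) Ω :=
    (((XD_contDiffOn hΩ h1).pow 2).add ((XD_contDiffOn hΩ h2).pow 2)).congr hJ
  have sh : ContDiffOn ℝ ∞ (fun q => (((JF f1 f2 q)⁻¹ : ℝ) : ℂ)) Ω :=
    toC (sJ.inv fun q hq => (hpos q hq).ne')
  refine ⟨hG, hW, fun α β w hα hβ hw p hp => ?_⟩
  obtain ⟨z1, z2⟩ := ZD_ZD_reciprocal_eq_zero hΩ sF hG hW sh hWF hfac hp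
  have ew : w = fun q => α q * (((JF f1 f2 q)⁻¹ : ℝ) : ℂ)
      + β q * ((((JF f1 f2 q)⁻¹ : ℝ) : ℂ) * CF f1 f2 q) := by
    funext q
    rw [hw q]
    ring
  rw [ew, ZD_ZD_combination hΩ hα hβ sh (sh.mul sF) hp, z1, z2]
  ring

end Conformal

/-- for a smooth conformal map f, each of the eight functions w₀ from the
conformal-vector-field list satisfies Z²w₀ = 0; in particular S_CR(f) = 0 on Ω. -/
theorem stmt_3 (Ω : Set Heis) (hΩ : IsOpen Ω) (f1 f2 f3 : Heis → ℝ)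
    (hconf : ConformalOn f1 f2 f3 Ω) :
    (∀ p ∈ Ω, ZD (ZD (Cplx (fun q =>
        (JF f1 f2 q)⁻¹ * (f3 q ^ 2 + (f1 q ^ 2 + f2 q ^ 2) ^ 2)))) p = 0) ∧
    (∀ p ∈ Ω, ZD (ZD (Cplx (fun q =>
        (JF f1 f2 q)⁻¹ * (f3 q * f2 q - f1 q * (f1 q ^ 2 + f2 q ^ 2))))) p = 0) ∧
    (∀ p ∈ Ω, ZD (ZD (Cplx (fun q =>
        (JF f1 f2 q)⁻¹ * (f3 q * f1 q + f2 q * (f1 q ^ 2 + f2 q ^ 2))))) p = 0) ∧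
    (∀ p ∈ Ω, ZD (ZD (Cplx (fun q =>
        (JF f1 f2 q)⁻¹ * (f1 q ^ 2 + f2 q ^ 2)))) p = 0) ∧
    (∀ p ∈ Ω, ZD (ZD (Cplx (fun q => (JF f1 f2 q)⁻¹ * f1 q))) p = 0) ∧
    (∀ p ∈ Ω, ZD (ZD (Cplx (fun q => (JF f1 f2 q)⁻¹ * f2 q))) p = 0) ∧
    (∀ p ∈ Ω, ZD (ZD (Cplx (fun q => (JF f1 f2 q)⁻¹ * f3 q))) p = 0) ∧
    (∀ p ∈ Ω, ZD (ZD (Cplx (fun q => (JF f1 f2 q)⁻¹))) p = 0) ∧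
    (∀ p ∈ Ω, SCR f1 f2 p = 0) := by
  obtain ⟨hG, hW, key⟩ := hconf.ZD_ZD_eq_zero hΩ
  have const (c : ℂ) : AntiCROn Ω fun _ => c := AntiCROn.const c
  have hGW := hG.mul hΩ hW
  have hGG := hG.mul hΩ hG
  have h_one := key (fun _ => 1) (fun _ => 0) (Cplx fun q => (JF f1 f2 q)⁻¹) (const 1) (const 0)
    (fun q => by simp [Cplx])
  refine ⟨?_, ?_, ?_, ?_, ?_, ?_, ?_, h_one, ?_⟩
  · refine key _ _ _ (hW.mul hΩ hW) ((const (2 * I)).mul hΩ hGW) fun q => ?_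
    simp only [Cplx, CF, CFconj, CRPotential]
    push_cast
    ring_nf
    simp only [I_sq, I_pow_three, I_pow_four]
    ring
  · refine key _ _ _ ((const (I / 2)).mul hΩ hGW)
      (((const (-I / 2)).mul hΩ hW).add hΩ ((const (-1)).mul hΩ hGG)) fun q => ?_
    simp only [Cplx, CF, CFconj, CRPotential]
    push_cast
    ring_nf
    simp only [I_sq, I_pow_three]
    ring
  · refine key _ _ _ ((const (1 / 2)).mul hΩ hGW)
      (((const (1 / 2)).mul hΩ hW).add hΩ ((const I).mul hΩ hGG)) fun q => ?_
    simp only [Cplx, CF, CFconj, CRPotential]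
    push_cast
    ring_nf
    simp only [I_sq, I_pow_three, I_pow_four]
    ring
  · refine key _ _ _ (const 0) hG fun q => ?_
    simp only [Cplx, CF, CFconj]
    push_cast
    ring_nf
    simp only [I_sq]
    ring
  · refine key _ _ _ ((const (1 / 2)).mul hΩ hG) (const (1 / 2)) fun q => ?_
    simp only [Cplx, CF, CFconj]
    push_cast
    ring
  · refine key _ _ _ ((const (I / 2)).mul hΩ hG) (const (-I / 2)) fun q => ?_
    simp only [Cplx, CF, CFconj]
    push_cast
    ring_nf
    simp only [I_sq]
    ring
  · refine key _ _ _ hW ((const I).mul hΩ hG) fun q => ?_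
    simp only [Cplx, CF, CFconj, CRPotential]
    push_cast
    ring_nf
    simp only [I_pow_three]
    ring
  · intro p hp
    have h : ZD (ZD fun q => (((JF f1 f2 q)⁻¹ : ℝ) : ℂ)) p = 0 := h_one p hp
    rw [SCR, h, mul_zero]
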